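/- Let D be a strongly connected digraph of order n ≥ 3 and let z_0 be some vertex of D. If d(x) + d(y) ≥ 2n − 1 for any two nonadjacent vertices x, y ∈ V(D) ∖ {z_0}, then D is Hamiltonian or contains a directed cycle of length n − 1. -/

import Mathlib

/-!
Basic definitions for finite digraphs (no loops, no multiple arcs), where the arc
relation is `A : V → V → Prop`.  Paths and cycles are given as lists of (distinct)
vertices.
-/

variable {V : Type*}

/-- A (directed) path, given by the list of its vertices. -/
def IsPathOn (A : V → V → Prop) (l : List V) : Prop :=
  l ≠ [] ∧ l.Nodup ∧ l.Chain' A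

/-- A (directed) cycle, given by the list of its vertices; its length (number of
arcs) equals the length of the list. -/
def IsCycleOn (A : V → V → Prop) (l : List V) : Prop :=
  2 ≤ l.length ∧ l.Nodup ∧ l.Chain' A ∧
    ∀ a ∈ l.getLast?, ∀ b ∈ l.head?, A a b

/-- A directed path from `a` to `b`. -/
def IsPathFromTo (A : V → V → Prop) (l : List V) (a b : V) : Prop :=
  IsPathOn A l ∧ l.head? = some a ∧ l.getLast? = some b

/-- Out-degree `d⁺(x)`. -/
noncomputable def outDeg (A : V → V → Prop) (x : V) : ℕ := {y | A x y}.ncard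

/-- In-degree `d⁻(x)`. -/
noncomputable def inDeg (A : V → V → Prop) (x : V) : ℕ := {y | A y x}.ncard

/-- Degree `d(x) = d⁺(x) + d⁻(x)`. -/
noncomputable def deg (A : V → V → Prop) (x : V) : ℕ := outDeg A x + inDeg A x

/-- Out-degree into a set, `d⁺(x, S)`. -/
noncomputable def outDegOn (A : V → V → Prop) (x : V) (S : Set V) : ℕ :=
  {y ∈ S | A x y}.ncard

/-- In-degree from a set, `d⁻(x, S)`. -/
noncomputable def inDegOn (A : V → V → Prop) (x : V) (S : Set V) : ℕ :=
  {y ∈ S | A y x}.ncard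

/-- Degree with respect to a set, `d(x, S) = d⁺(x, S) + d⁻(x, S)`. -/
noncomputable def degOn (A : V → V → Prop) (x : V) (S : Set V) : ℕ :=
  outDegOn A x S + inDegOn A x S

/-- Two distinct vertices are adjacent if there is an arc between them in some
direction. -/
def DAdj (A : V → V → Prop) (x y : V) : Prop := A x y ∨ A y x

/-- `D` is `S`-strongly connected: between any two distinct vertices of `S` there
are directed paths in both directions. -/
def SetStronglyConnected (A : V → V → Prop) (S : Set V) : Prop :=
  ∀ x ∈ S, ∀ y ∈ S, x ≠ y → ∃ l, IsPathFromTo A l x y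

/-- Strong connectivity. -/
def StronglyConnected (A : V → V → Prop) : Prop :=
  ∀ x y : V, x ≠ y → ∃ l, IsPathFromTo A l x y

/-- 2-strong connectivity: at least 3 vertices, and deleting any vertex leaves a
strongly connected digraph. -/
def TwoStronglyConnected [Fintype V] (A : V → V → Prop) : Prop :=
  3 ≤ Fintype.card V ∧
    ∀ w x y : V, x ≠ w → y ≠ w → x ≠ y → ∃ l, IsPathFromTo A l x y ∧ w ∉ l

/-- Condition `A₀` for a set `Y` of vertices. -/
def CondA0 [Fintype V] (A : V → V → Prop) (Y : Set V) : Prop :=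
  ∀ x ∈ Y, ∀ y ∈ Y, ∀ z ∈ Y,
    x ≠ y → x ≠ z → y ≠ z → ¬ DAdj A x y →
      (¬ A x z →
        deg A x + deg A y + outDeg A x + inDeg A z ≥ 3 * Fintype.card V - 2) ∧
      (¬ A z x →
        deg A x + deg A y + inDeg A x + outDeg A z ≥ 3 * Fintype.card V - 2)

/-- A `C`-bypass: a path of length at least two whose end-vertices lie on the
cycle `c` and whose internal vertices avoid `c`. -/
def IsBypass (A : V → V → Prop) (c p : List V) : Prop :=
  IsPathOn A p ∧ 3 ≤ p.length ∧
    (∀ a ∈ p.head?, a ∈ c) ∧ (∀ b ∈ p.getLast?, b ∈ c) ∧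
    ∀ v ∈ p.tail.dropLast, v ∉ c

/-- The vertex `y` can be inserted into the path `p`. -/
def CanInsert (A : V → V → Prop) (p : List V) (y : V) : Prop :=
  ∃ i, ∃ h : i + 1 < p.length, A (p[i]'(Nat.lt_of_succ_lt h)) y ∧ A y (p[i+1]'h)

/-- A `(C, x)`-path: a path from a vertex `u` of the cycle `c` to `x`, meeting `c`
only in `u`. -/
def IsCtoXPath (A : V → V → Prop) (c l : List V) (u x : V) : Prop :=
  IsPathFromTo A l u x ∧ u ∈ c ∧ ∀ v ∈ l, v ∈ c → v = u

/-- An `(x, C)`-path: a path from `x` to a vertex `v` of the cycle `c`, meeting `c`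
only in `v`. -/
def IsXtoCPath (A : V → V → Prop) (c l : List V) (x v : V) : Prop :=
  IsPathFromTo A l x v ∧ v ∈ c ∧ ∀ w ∈ l, w ∈ c → w = v

theorem isCycleOn_append_comm {A : V → V → Prop} {l₁ l₂ : List V}
    (h : IsCycleOn A (l₁ ++ l₂)) : IsCycleOn A (l₂ ++ l₁) := by
  rcases eq_or_ne l₁ [] with rfl | h₁
  · simpa using h
  rcases eq_or_ne l₂ [] with rfl | h₂
  · simpa using h
  obtain ⟨hlen, hnd, hch, hcl⟩ := h
  refine ⟨by simp at hlen ⊢; omega, (List.perm_append_comm.nodup_iff).1 hnd, ?_, ?_⟩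
  · rw [List.Chain', List.isChain_append] at hch ⊢
    rw [List.getLast?_append_of_ne_nil _ h₂, List.head?_append_of_ne_nil _ h₁] at hcl
    exact ⟨hch.2.1, hch.1, hcl⟩
  · rw [List.Chain', List.isChain_append] at hch
    rw [List.getLast?_append_of_ne_nil _ h₁, List.head?_append_of_ne_nil _ h₂]
    exact hch.2.2

theorem isCycleOn_of_isRotated {A : V → V → Prop} {l₁ l₂ : List V}
    (h : IsCycleOn A l₁) (hr : List.IsRotated l₁ l₂) : IsCycleOn A l₂ := by
  obtain ⟨n, hn, rfl⟩ := List.isRotated_iff_mod.1 hr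
  rw [List.rotate_eq_drop_append_take hn]
  exact isCycleOn_append_comm (by rwa [List.take_append_drop])

/-- A path `p` closes up to a cycle through `q` if and only if `q` is the interior of a walk
from the end to the start of `p` avoiding `p`. -/
theorem isCycleOn_append_iff {A : V → V → Prop} {p q : List V} {a b : V}
    (hp : IsPathFromTo A p a b) (hq : q ≠ []) :
    IsCycleOn A (p ++ q) ↔
      q.Nodup ∧ (∀ v ∈ q, v ∉ p) ∧ List.IsChain A (b :: (q ++ [a])) := by
  obtain ⟨⟨hne, hnd, hch⟩, ha, hb⟩ := hp
  have hlp := List.length_pos_iff.2 hne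
  have hlq := List.length_pos_iff.2 hq
  rw [IsCycleOn, List.Chain', List.isChain_append, List.nodup_append',
    List.head?_append_of_ne_nil _ hne,
    List.getLast?_append_of_ne_nil _ hq, ha, hb, List.isChain_cons, List.isChain_append,
    List.head?_append_of_ne_nil _ hq]
  have h2 : 2 ≤ (p ++ q).length := by simp; omega
  simp only [h2, hnd, true_and, List.disjoint_right]
  simp
  tauto

theorem exists_nodup_walk [DecidableEq V] {A : V → V → Prop} {a b z : V} (w : List V)
    (hw : List.IsChain A (a :: (w ++ [b]))) (hz : w.count z ≤ 1) (hu : ∃ u ∈ w, u ≠ z) :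
    ∃ w' : List V, List.IsChain A (a :: (w' ++ [b])) ∧ w'.Nodup ∧ (∃ u ∈ w', u ≠ z) ∧ w' ⊆ w := by
  induction hn : w.length using Nat.strong_induction_on generalizing w with
  | _ n ih =>
  by_cases hnd : w.Nodup
  · exact ⟨w, hw, hnd, hu, List.Subset.refl _⟩
  obtain ⟨v, hv⟩ : ∃ v, List.Duplicate v w := by
    simpa [List.nodup_iff_forall_not_duplicate] using hnd
  have hc := List.duplicate_iff_two_le_count.1 hv
  have hvz : v ≠ z := by rintro rfl; omega
  obtain ⟨r₁, r₂, rfl, hv₁, hv₂⟩ := List.cons_sublist_iff.1 (List.duplicate_iff_sublist.1 hv)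
  obtain ⟨l₁, l₂, rfl⟩ := List.append_of_mem hv₁
  obtain ⟨l₃, l₄, rfl⟩ := List.append_of_mem (List.singleton_sublist.1 hv₂)
  have hsub : List.Sublist (l₁ ++ v :: l₄) ((l₁ ++ v :: l₂) ++ (l₃ ++ v :: l₄)) := by
    rw [List.append_assoc, List.append_sublist_append_left, List.cons_append,
      List.cons_sublist_cons]
    exact ((List.sublist_cons_self _ _).trans (List.sublist_append_right _ _)).trans
      (List.sublist_append_right _ _)
  obtain ⟨w', h₁, h₂, h₃, h₄⟩ := ih (l₁ ++ v :: l₄).length (by simp at hn ⊢; omega) (l₁ ++ v :: l₄)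
    (by
      have e : a :: ((l₁ ++ v :: l₂) ++ (l₃ ++ v :: l₄) ++ [b]) =
        (a :: l₁) ++ v :: ((l₂ ++ l₃) ++ v :: (l₄ ++ [b])) := by simp
      rw [e, List.isChain_split] at hw
      have e' : a :: (l₁ ++ v :: l₄ ++ [b]) = (a :: l₁) ++ v :: (l₄ ++ [b]) := by simp
      rw [e', List.isChain_split]
      exact ⟨hw.1, hw.2.right_of_append (l₁ := v :: (l₂ ++ l₃))⟩)
    ((hsub.count_le z).trans hz) ⟨v, by simp, hvz⟩ rfl
  exact ⟨w', h₁, h₂, h₃, fun _ h => hsub.subset (h₄ h)⟩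

theorem exists_walk_to_mem {A : V → V → Prop} {S : Set V} (l : List V) (x : V) (hx : x ∉ S)
    (hch : List.IsChain A (x :: l)) (hnd : (x :: l).Nodup) (hS : ∃ v ∈ l, v ∈ S) :
    ∃ (w : List V) (b : V), b ∈ S ∧ List.IsChain A (x :: (w ++ [b])) ∧ (x :: w).Nodup ∧
      (∀ v ∈ w, v ∉ S) ∧ w ⊆ l := by
  induction l generalizing x with
  | nil => simp at hS
  | cons c l ih =>
    rw [List.isChain_cons_cons] at hch
    by_cases hc : c ∈ S
    · exact ⟨[], c, hc, by simpa using hch.1, by simp, by simp, by simp⟩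
    · obtain ⟨w, b, hb, hw, hwn, hwS, hwl⟩ := ih c hc hch.2 (List.nodup_cons.1 hnd).2 (by
        obtain ⟨v, hv, hvS⟩ := hS
        rcases List.mem_cons.1 hv with rfl | hv
        · exact absurd hvS hc
        · exact ⟨v, hv, hvS⟩)
      refine ⟨c :: w, b, hb, by simpa using ⟨hch.1, hw⟩, ?_, by simpa using ⟨hc, hwS⟩,
        List.cons_subset_cons _ hwl⟩
      have := (List.nodup_cons.1 hnd).1
      refine List.nodup_cons.2 ⟨fun h => this ?_, hwn⟩
      exact List.cons_subset_cons _ hwl h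

theorem exists_walk_out {A : V → V → Prop} (hconn : StronglyConnected A) {S : Set V}
    (hS : S.Nonempty) {u : V} (hu : u ∉ S) :
    ∃ (w : List V) (b : V), b ∈ S ∧ List.IsChain A (u :: (w ++ [b])) ∧ (u :: w).Nodup ∧
      ∀ v ∈ w, v ∉ S := by
  obtain ⟨s, hs⟩ := hS
  obtain ⟨l, ⟨⟨hne, hnd, hch⟩, hh, hl⟩⟩ := hconn u s (by rintro rfl; exact hu hs)
  obtain ⟨l, rfl⟩ : ∃ l', l = u :: l' := List.head?_eq_some_iff.1 hh
  obtain ⟨w, b, hb, hw, hwn, hwS, -⟩ := exists_walk_to_mem l u hu hch hnd ⟨s, by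
    rcases List.mem_cons.1 (List.mem_of_getLast? hl) with rfl | h
    · exact absurd hs hu
    · exact h, hs⟩
  exact ⟨w, b, hb, hw, hwn, hwS⟩

theorem StronglyConnected.flip {A : V → V → Prop} (h : StronglyConnected A) :
    StronglyConnected (flip A) := by
  intro x y hxy
  obtain ⟨l, ⟨⟨hne, hnd, hch⟩, hh, hl⟩⟩ := h y x hxy.symm
  exact ⟨l.reverse, ⟨by simpa using hne, List.nodup_reverse.2 hnd, List.isChain_reverse.2 hch⟩,
    by simpa using hl, by simpa using hh⟩

theorem exists_walk_in {A : V → V → Prop} (hconn : StronglyConnected A) {S : Set V}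
    (hS : S.Nonempty) {u : V} (hu : u ∉ S) :
    ∃ (w : List V) (a : V), a ∈ S ∧ List.IsChain A (a :: (w ++ [u])) ∧ (w ++ [u]).Nodup ∧
      ∀ v ∈ w, v ∉ S := by
  obtain ⟨w, b, hb, hw, hwn, hwS⟩ := exists_walk_out hconn.flip hS hu
  refine ⟨w.reverse, b, hb, ?_, ?_, by simpa using hwS⟩
  · have := List.isChain_reverse.2 hw
    simpa [flip] using this
  · have := List.nodup_reverse.2 hwn
    simpa using this

/-- A longest cycle which avoids `z` whenever some longest cycle does. -/
def IsGoodCycle (A : V → V → Prop) (z : V) (c : List V) : Prop :=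
  IsCycleOn A c ∧
    ∀ c', IsCycleOn A c' → c'.length ≤ c.length ∧ (c'.length = c.length → z ∈ c → z ∈ c')

theorem IsGoodCycle.of_isRotated {A : V → V → Prop} {z : V} {c c' : List V}
    (h : IsGoodCycle A z c) (hr : List.IsRotated c c') : IsGoodCycle A z c' := by
  refine ⟨isCycleOn_of_isRotated h.1 hr, ?_⟩
  simpa only [← hr.perm.length_eq, ← hr.mem_iff] using h.2

theorem exists_isGoodCycle [Fintype V] {A : V → V → Prop} (z : V) (h : ∃ c, IsCycleOn A c) :
    ∃ c, IsGoodCycle A z c := by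
  classical
  obtain ⟨c, hc, hmin⟩ := (measure fun c : List V =>
    2 * (Fintype.card V - c.length) + if z ∈ c then 1 else 0).wf.has_min {c | IsCycleOn A c} h
  refine ⟨c, hc, fun c' hc' => ?_⟩
  have h₁ := hmin c' hc'
  have h₂ : c.length ≤ Fintype.card V := List.Nodup.length_le_card hc.2.1
  have h₃ : c'.length ≤ Fintype.card V := List.Nodup.length_le_card hc'.2.1
  simp only [InvImage, WellFoundedRelation.rel] at h₁
  constructor
  · by_contra h
    apply h₁
    split_ifs <;> omega
  · intro hl hz
    by_contra h
    apply h₁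
    simp [hz, h, hl]

theorem IsCycleOn.exists_isPathFromTo {A : V → V → Prop} {p s : List V} (hp : p ≠ [])
    (h : IsCycleOn A (p ++ s)) : ∃ a b, IsPathFromTo A p a b :=
  ⟨p.head hp, p.getLast hp, ⟨hp, (List.nodup_append.1 h.2.1).1, (List.isChain_append.1 h.2.2.1).1⟩,
    List.head?_eq_some_head hp, List.getLast?_eq_some_getLast hp⟩

/-- A good cycle `p ++ s` together with a cycle `p ++ q` sharing the path `p` with it, where `q`
is disjoint from the first cycle and does not consist of `z` only. -/
structure IsEar (A : V → V → Prop) (z : V) (p s q : List V) : Prop where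
  good : IsGoodCycle A z (p ++ s)
  ne_nil : p ≠ []
  cycle : IsCycleOn A (p ++ q)
  disjoint : ∀ v ∈ q, v ∉ s
  exists_ne : ∃ u ∈ q, u ≠ z

theorem exists_isEar_of_path [DecidableEq V] {A : V → V → Prop} {z a b : V} {p s w : List V}
    (hgood : IsGoodCycle A z (p ++ s)) (hp : IsPathFromTo A p a b)
    (hw : List.IsChain A (b :: (w ++ [a]))) (hdisj : ∀ v ∈ w, v ∉ p ++ s)
    (hz : w.count z ≤ 1) (hu : ∃ u ∈ w, u ≠ z) : ∃ q, IsEar A z p s q := by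
  obtain ⟨q, hq, hqn, hqu, hqw⟩ := exists_nodup_walk w hw hz hu
  refine ⟨q, hgood, hp.1.1, (isCycleOn_append_iff hp ?_).2 ⟨hqn, fun v hv h => ?_, hq⟩,
    fun v hv h => ?_, hqu⟩
  · rintro rfl
    simp at hqu
  · exact hdisj v (hqw hv) (List.mem_append_left _ h)
  · exact hdisj v (hqw hv) (List.mem_append_right _ h)

theorem exists_isEar_of_walk [DecidableEq V] {A : V → V → Prop} {z x b : V} {c w : List V}
    (hgood : IsGoodCycle A z c) (hx : x ∈ c) (hb : b ∈ c)
    (hw : List.IsChain A (x :: (w ++ [b]))) (hdisj : ∀ v ∈ w, v ∉ c)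
    (hz : w.count z ≤ 1) (hu : ∃ u ∈ w, u ≠ z) : ∃ p s q, IsEar A z p s q := by
  obtain ⟨l₁, l₂, rfl⟩ := List.append_of_mem hx
  have hr : List.IsRotated (l₁ ++ x :: l₂) (l₂ ++ (l₁ ++ [x])) := by
    have : l₁ ++ x :: l₂ = (l₁ ++ [x]) ++ l₂ := by simp
    rw [this]
    exact List.isRotated_append
  obtain ⟨s, p, hsp⟩ := List.append_of_mem (hr.mem_iff.1 hb)
  have hr' : List.IsRotated (l₁ ++ x :: l₂) ((b :: p) ++ s) := by
    rw [hsp] at hr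
    exact hr.trans List.isRotated_append
  have hlast : (b :: p).getLast? = some x := by
    have := congrArg List.getLast? hsp
    rw [List.getLast?_append_of_ne_nil _ (by simp), List.getLast?_append_of_ne_nil _ (by simp),
      List.getLast?_append_of_ne_nil _ (by simp)] at this
    simpa using this.symm
  have hg := hgood.of_isRotated hr'
  obtain ⟨q, hq⟩ := exists_isEar_of_path hg (a := b) (b := x)
    ⟨⟨by simp, (List.nodup_append.1 hg.1.2.1).1, (List.isChain_append.1 hg.1.2.2.1).1⟩,
      by simp, hlast⟩ hw (fun v hv h => hdisj v hv (hr'.mem_iff.2 h)) hz hu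
  exact ⟨_, _, q, hq⟩

/-- An ear leaving a shortest possible segment `s` of the good cycle uncovered. -/
structure IsMinEar (A : V → V → Prop) (z : V) (p s q : List V) : Prop
    extends IsEar A z p s q where
  min : ∀ p' s' q', IsEar A z p' s' q' → s.length ≤ s'.length

theorem exists_isMinEar {A : V → V → Prop} {z : V} (h : ∃ p s q, IsEar A z p s q) :
    ∃ p s q, IsMinEar A z p s q := by
  obtain ⟨p, s, q, h⟩ := h
  obtain ⟨⟨p, s, q⟩, hc, hmin⟩ := (measure fun t : List V × List V × List V =>
    t.2.1.length).wf.has_min {t | IsEar A z t.1 t.2.1 t.2.2} ⟨(p, s, q), h⟩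
  exact ⟨p, s, q, hc, fun p' s' q' h' => not_lt.1 (hmin (p', s', q') h')⟩

theorem IsMinEar.not_walk_to [DecidableEq V] {A : V → V → Prop} {z a b y : V} {p s q w : List V}
    (h : IsMinEar A z p s q) (hp : IsPathFromTo A p a b) (hy : y ∈ s)
    (hdisj : ∀ v ∈ w, v ∉ p ++ s) (hz : w.count z ≤ 1) (hu : ∃ u ∈ w, u ≠ z) :
    ¬ List.IsChain A (b :: (w ++ [y])) := by
  intro hw
  obtain ⟨s₁, s₂, rfl⟩ := List.append_of_mem hy
  have hr : List.IsRotated (p ++ (s₁ ++ y :: s₂)) ((y :: (s₂ ++ p)) ++ s₁) := by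
    have e₁ : p ++ (s₁ ++ y :: s₂) = (p ++ s₁) ++ y :: s₂ := by simp
    have e₂ : (y :: (s₂ ++ p)) ++ s₁ = y :: s₂ ++ (p ++ s₁) := by simp
    rw [e₁, e₂]
    exact List.isRotated_append
  have hg := h.good.of_isRotated hr
  obtain ⟨q', hq'⟩ := exists_isEar_of_path hg (a := y) (b := b)
    ⟨⟨by simp, (List.nodup_append.1 hg.1.2.1).1, (List.isChain_append.1 hg.1.2.2.1).1⟩,
      by simp, by
        rw [← List.cons_append, List.getLast?_append_of_ne_nil _ hp.1.1]; exact hp.2.2⟩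
    hw (fun v hv h => hdisj v hv (hr.mem_iff.2 h)) hz hu
  have := h.min _ _ _ hq'
  simp at this

theorem IsMinEar.not_walk_from [DecidableEq V] {A : V → V → Prop} {z a b y : V} {p s q w : List V}
    (h : IsMinEar A z p s q) (hp : IsPathFromTo A p a b) (hy : y ∈ s)
    (hdisj : ∀ v ∈ w, v ∉ p ++ s) (hz : w.count z ≤ 1) (hu : ∃ u ∈ w, u ≠ z) :
    ¬ List.IsChain A (y :: (w ++ [a])) := by
  intro hw
  obtain ⟨s₁, s₂, rfl⟩ := List.append_of_mem hy
  have e : p ++ (s₁ ++ y :: s₂) = (p ++ (s₁ ++ [y])) ++ s₂ := by simp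
  rw [e] at hdisj
  have hg := h.good
  rw [e] at hg
  obtain ⟨q', hq'⟩ := exists_isEar_of_path hg (a := a) (b := y)
    ⟨⟨by simp, (List.nodup_append.1 hg.1.2.1).1, (List.isChain_append.1 hg.1.2.2.1).1⟩,
      by rw [List.head?_append_of_ne_nil _ hp.1.1]; exact hp.2.1, by simp⟩ hw hdisj hz hu
  have := h.min _ _ _ hq'
  simp at this
  omega

theorem isChain_insert {A : V → V → Prop} {l₁ l₂ : List V} {v u w : V}
    (h : List.IsChain A (l₁ ++ v :: w :: l₂)) (hv : A v u) (hw : A u w) :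
    List.IsChain A (l₁ ++ v :: u :: w :: l₂) := by
  rw [List.isChain_append_cons_cons] at h ⊢
  exact ⟨h.1, hv, List.isChain_cons_cons.2 ⟨hw, h.2.2⟩⟩

theorem IsPathFromTo.insert {A : V → V → Prop} {l₁ l₂ : List V} {a b v u w : V}
    (h : IsPathFromTo A (l₁ ++ v :: w :: l₂) a b) (hv : A v u) (hw : A u w)
    (hu : u ∉ l₁ ++ v :: w :: l₂) : IsPathFromTo A (l₁ ++ v :: u :: w :: l₂) a b := by
  obtain ⟨⟨hne, hnd, hch⟩, ha, hb⟩ := h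
  have e : (l₁ ++ v :: u :: w :: l₂).Perm (u :: (l₁ ++ v :: w :: l₂)) := by
    have := List.perm_middle (a := u) (l₁ := l₁ ++ [v]) (l₂ := w :: l₂)
    simpa using this
  refine ⟨⟨by simp, e.nodup_iff.2 (List.nodup_cons.2 ⟨hu, hnd⟩), isChain_insert hch hv hw⟩, ?_, ?_⟩
  · cases l₁ <;> simpa using ha
  · rw [List.getLast?_append_of_ne_nil _ (by simp)] at hb ⊢
    simpa using hb

/-- The number of arcs between `u` and `v`. -/
noncomputable def arcCount (A : V → V → Prop) (u v : V) : ℕ :=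
  open Classical in (if A u v then 1 else 0) + (if A v u then 1 else 0)

theorem deg_eq_sum_arcCount [Fintype V] (A : V → V → Prop) (u : V) :
    deg A u = ∑ v, arcCount A u v := by
  classical
  simp only [deg, outDeg, inDeg, arcCount, Finset.sum_add_distrib, Finset.sum_boole, Nat.cast_id]
  congr 1 <;> rw [Set.ncard_eq_toFinset_card'] <;> simp

theorem arcCount_le_two (A : V → V → Prop) (u v : V) : arcCount A u v ≤ 2 := by
  unfold arcCount
  split_ifs <;> simp

theorem sum_arcCount_path_le {A : V → V → Prop} {l : List V} {a b : V} (u : V)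
    (ha : l.head? = some a) (hb : l.getLast? = some b)
    (hins : ∀ ⦃v w l₁ l₂⦄, l = l₁ ++ v :: w :: l₂ → ¬ (A v u ∧ A u w)) :
    open Classical in (l.map (arcCount A u)).sum + 1 ≤
      l.length + (if A b u then 1 else 0) + (if A u a then 1 else 0) := by
  classical
  induction l generalizing a with
  | nil => simp at ha
  | cons c l ih =>
    obtain rfl : c = a := by simpa using ha
    rcases l with - | ⟨d, l⟩
    · obtain rfl : c = b := by simpa using hb
      simp [arcCount]
      omega
    · have h₁ := ih (a := d) (by simp) (by simpa using hb)
        (fun v w l₁ l₂ h => hins (l₁ := c :: l₁) (l₂ := l₂) (by simp [h]))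
      have h₂ := hins (l₁ := []) (l₂ := l) rfl
      simp only [List.map_cons, List.sum_cons, List.length_cons, arcCount] at h₁ ⊢
      split_ifs at h₁ ⊢ <;> first | omega | tauto

theorem IsMinEar.not_mem_of_mem {A : V → V → Prop} {z v : V} {p s q : List V}
    (h : IsMinEar A z p s q) (hv : v ∈ q) : v ∉ p ++ s := by
  intro hvs
  rcases List.mem_append.1 hvs with hvp | hvs
  · exact (List.nodup_append'.1 h.cycle.2.1).2.2 hvp hv
  · exact h.disjoint v hv hvs

section MinEar

variable {A : V → V → Prop} {z a b u y : V} {p s q : List V}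

theorem IsMinEar.not_two_walk_to (h : IsMinEar A z p s q) (hp : IsPathFromTo A p a b) (hu : u ∈ q)
    (huz : u ≠ z) (hy : y ∈ s) : ¬ A u y ∧ ∀ w ∉ p ++ s, w ≠ z → ¬ (A u w ∧ A w y) := by
  classical
  obtain ⟨q₁, q₂, rfl⟩ := List.append_of_mem hu
  obtain ⟨hn, -, hch⟩ := (isCycleOn_append_iff hp (by simp)).1 h.cycle
  have hq₁ : List.IsChain A ((b :: q₁) ++ [u]) := by
    have e : b :: (q₁ ++ u :: q₂ ++ [a]) = (b :: q₁) ++ u :: (q₂ ++ [a]) := by simp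
    rw [e, List.isChain_split] at hch
    exact hch.1
  have hsub : List.Sublist (q₁ ++ [u]) (q₁ ++ u :: q₂) := by simp
  have hcount : (q₁ ++ [u]).count z ≤ 1 := List.nodup_iff_count_le_one.1 (hn.sublist hsub) z
  have hdisj : ∀ v ∈ q₁ ++ [u], v ∉ p ++ s := fun v hv => h.not_mem_of_mem (hsub.subset hv)
  constructor
  · intro huy
    refine h.not_walk_to hp hy hdisj hcount ⟨u, by simp, huz⟩ ?_
    have e : b :: (q₁ ++ [u] ++ [y]) = (b :: q₁) ++ u :: [y] := by simp
    rw [e, List.isChain_split]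
    exact ⟨hq₁, by simpa using huy⟩
  · rintro w hw hwz ⟨huw, hwy⟩
    refine h.not_walk_to hp hy (w := q₁ ++ [u] ++ [w]) ?_ ?_ ⟨u, by simp, huz⟩ ?_
    · intro v hv
      rcases List.mem_append.1 hv with hv | hv
      · exact hdisj v hv
      · rwa [List.mem_singleton.1 hv]
    · rw [List.count_append, List.count_singleton]
      simpa [hwz] using hcount
    · have e : b :: (q₁ ++ [u] ++ [w] ++ [y]) = (b :: q₁) ++ u :: [w, y] := by simp
      rw [e, List.isChain_split]
      exact ⟨hq₁, by simpa using ⟨huw, hwy⟩⟩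

theorem IsMinEar.not_two_walk_from (h : IsMinEar A z p s q) (hp : IsPathFromTo A p a b)
    (hu : u ∈ q) (huz : u ≠ z) (hy : y ∈ s) :
    ¬ A y u ∧ ∀ w ∉ p ++ s, w ≠ z → ¬ (A y w ∧ A w u) := by
  classical
  obtain ⟨q₁, q₂, rfl⟩ := List.append_of_mem hu
  obtain ⟨hn, -, hch⟩ := (isCycleOn_append_iff hp (by simp)).1 h.cycle
  have hq₂ : List.IsChain A (u :: (q₂ ++ [a])) := by
    have e : b :: (q₁ ++ u :: q₂ ++ [a]) = (b :: q₁) ++ u :: (q₂ ++ [a]) := by simp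
    rw [e, List.isChain_split] at hch
    exact hch.2
  have hsub : List.Sublist (u :: q₂) (q₁ ++ u :: q₂) := List.sublist_append_right _ _
  have hcount : (u :: q₂).count z ≤ 1 := List.nodup_iff_count_le_one.1 (hn.sublist hsub) z
  have hdisj : ∀ v ∈ u :: q₂, v ∉ p ++ s := fun v hv => h.not_mem_of_mem (hsub.subset hv)
  constructor
  · intro hyu
    refine h.not_walk_from hp hy hdisj hcount ⟨u, by simp, huz⟩ ?_
    exact List.isChain_cons_cons.2 ⟨hyu, hq₂⟩
  · rintro w hw hwz ⟨hyw, hwu⟩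
    refine h.not_walk_from hp hy (w := w :: u :: q₂) ?_ ?_ ⟨u, by simp, huz⟩ ?_
    · intro v hv
      rcases List.mem_cons.1 hv with rfl | hv
      · exact hw
      · exact hdisj v hv
    · rw [List.count_cons]
      simpa [hwz] using hcount
    · exact List.isChain_cons_cons.2 ⟨hyw, List.isChain_cons_cons.2 ⟨hwu, hq₂⟩⟩

theorem IsMinEar.not_walk_exceptional (h : IsMinEar A z p s q) (hp : IsPathFromTo A p a b)
    (hu : u ∈ q) (huz : u ≠ z) (hy : y ∈ s) (hz : z ∉ p ++ s) :
    ¬ (A b u ∧ A u z ∧ A z y) ∧ ¬ (A y z ∧ A z u ∧ A u a) := by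
  classical
  have hus := h.not_mem_of_mem hu
  refine ⟨fun hw => h.not_walk_to hp hy (w := [u, z]) ?_ ?_ ⟨u, by simp, huz⟩ ?_,
    fun hw => h.not_walk_from hp hy (w := [z, u]) ?_ ?_ ⟨u, by simp, huz⟩ ?_⟩
  · rintro v hv
    rcases List.mem_pair.1 hv with rfl | rfl <;> assumption
  · simp [huz]
  · simpa using hw
  · rintro v hv
    rcases List.mem_pair.1 hv with rfl | rfl <;> assumption
  · simp [huz]
  · simpa using hw

theorem IsMinEar.not_insert (h : IsMinEar A z p s q) (hp : IsPathFromTo A p a b) (hu : u ∈ q)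
    ⦃v w : V⦄ ⦃l₁ l₂ : List V⦄ (hl : p = l₁ ++ v :: w :: l₂) : ¬ (A v u ∧ A u w) := by
  rintro ⟨hv, hw⟩
  have hus := h.not_mem_of_mem hu
  subst hl
  have hp' := hp.insert hv hw (fun hh => hus (List.mem_append_left _ hh))
  have hs : s ≠ [] := by
    rintro rfl
    have h₁ := (h.good.2 _ h.cycle).1
    have h₂ := List.length_pos_of_mem hu
    simp only [List.length_append, List.length_nil] at h₁
    omega
  have hc := h.good.1
  rw [isCycleOn_append_iff hp hs] at hc
  have := (h.good.2 _ ((isCycleOn_append_iff hp' hs).2 ⟨hc.1, fun x hx hx' => ?_, hc.2.2⟩)).1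
  · simp at this
  · have h₁ := hc.2.1 x hx
    have : x ≠ u := by rintro rfl; exact hus (List.mem_append_right _ hx)
    simp at h₁ hx'
    tauto

/-- A longest path through the vertices of a good cycle containing the common part `p` of
a minimal ear leaves out a vertex other than `z`. -/
theorem IsMinEar.exists_maximal_path (h : IsMinEar A z p s q) (hp : IsPathFromTo A p a b) :
    ∃ r y, IsPathFromTo A r a b ∧ p ⊆ r ∧ r ⊆ p ++ s ∧ y ∈ s ∧ y ∉ r ∧ y ≠ z ∧
      ∀ ⦃v w l₁ l₂⦄, r = l₁ ++ v :: w :: l₂ → ¬ (A v y ∧ A y w) := by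
  classical
  obtain ⟨r, ⟨hr, hpr, hrs⟩, hmin⟩ := (measure fun r : List V =>
    (p ++ s).length - r.length).wf.has_min {r | IsPathFromTo A r a b ∧ p ⊆ r ∧ r ⊆ p ++ s}
    ⟨p, hp, List.Subset.refl _, List.subset_append_left _ _⟩
  have hmax : ∀ r', IsPathFromTo A r' a b → p ⊆ r' → r' ⊆ p ++ s → r'.length ≤ r.length := by
    intro r' h₁ h₂ h₃
    have h₄ := hmin r' ⟨h₁, h₂, h₃⟩
    have h₅ := (List.subperm_of_subset h₁.1.2.1 h₃).length_le
    have h₆ := (List.subperm_of_subset hr.1.2.1 hrs).length_le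
    simp only [InvImage, WellFoundedRelation.rel] at h₄
    by_contra h₇
    apply h₄
    omega
  obtain ⟨y, hyc, hyr, hyz⟩ : ∃ y ∈ p ++ s, y ∉ r ∧ y ≠ z := by
    by_contra! hall
    have hq : q ≠ [] := by
      rintro rfl
      simpa using h.exists_ne
    have hcq := (isCycleOn_append_iff hp hq).1 h.cycle
    obtain ⟨h₁, h₂⟩ := h.good.2 (r ++ q) ((isCycleOn_append_iff hr hq).2
      ⟨hcq.1, fun v hv hvr => h.not_mem_of_mem hv (hrs hvr), hcq.2.2⟩)
    have h₃ := List.length_pos_iff.2 hq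
    have hnd := h.good.1.2.1
    by_cases hz : z ∈ p ++ s ∧ z ∉ r
    · have h₄ := (List.subperm_of_subset hnd (l₂ := z :: r) fun v hv => by
        by_cases hvr : v ∈ r
        · simp [hvr]
        · simp [hall v hv hvr]).length_le
      rw [List.length_append] at h₁ h₂
      rw [List.length_cons] at h₄
      have h₅ := h₂ (by omega) hz.1
      rcases List.mem_append.1 h₅ with h₅ | h₅
      · exact hz.2 h₅
      · exact h.not_mem_of_mem h₅ hz.1
    · have h₄ := (List.subperm_of_subset hnd (l₂ := r) fun v hv => by
        by_contra hvr
        obtain rfl := hall v hv hvr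
        exact hz ⟨hv, hvr⟩).length_le
      rw [List.length_append] at h₁
      omega
  refine ⟨r, y, hr, hpr, hrs, (List.mem_append.1 hyc).resolve_left fun h => hyr (hpr h), hyr, hyz,
    ?_⟩
  rintro v w l₁ l₂ rfl ⟨hv, hw⟩
  have := hmax _ (hr.insert hv hw hyr) (fun x hx => ?_) (fun x hx => ?_)
  · simp at this
  · have := hpr hx
    simp at this ⊢
    tauto
  · by_cases hxy : x = y
    · exact hxy ▸ hyc
    · exact hrs (by simp at hx ⊢; tauto)

end MinEar

/-- A vertex contributes more than two to the sum of the degrees of `u` and `y` only if it is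
the middle of a path of length two between them. -/
theorem sum_arcCount_add_le (A : V → V → Prop) (u y : V) (T : Finset V) :
    open Classical in ∑ w ∈ T, (arcCount A u w + arcCount A y w) ≤
      2 * T.card + (∑ w ∈ T, (if A u w ∧ A w y then 1 else 0) +
        ∑ w ∈ T, (if A y w ∧ A w u then 1 else 0)) := by
  classical
  rw [mul_comm, ← smul_eq_mul, ← Finset.sum_const, ← Finset.sum_add_distrib,
    ← Finset.sum_add_distrib]
  refine Finset.sum_le_sum fun w _ => ?_
  unfold arcCount
  split_ifs <;> first | omega | tauto

theorem sum_ite_le_one {T : Finset V} {P : V → Prop} [DecidablePred P]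
    (hP : ∀ v ∈ T, ∀ w ∈ T, P v → P w → v = w) : ∑ v ∈ T, (if P v then 1 else 0) ≤ 1 := by
  rw [Finset.sum_boole, Nat.cast_id, Finset.card_le_one]
  simp only [Finset.mem_filter]
  exact fun v hv w hw => hP v hv.1 w hw.1 hv.2 hw.2

theorem IsMinEar.exists_deg_add_deg_le [Fintype V] {A : V → V → Prop} (hloops : ∀ v, ¬ A v v)
    {z : V} {p s q : List V} (h : IsMinEar A z p s q) :
    ∃ u y, u ≠ z ∧ y ≠ z ∧ u ≠ y ∧ ¬ DAdj A u y ∧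
      deg A u + deg A y + 2 ≤ 2 * Fintype.card V := by
  classical
  obtain ⟨u, hu, huz⟩ := h.exists_ne
  obtain ⟨a, b, hp⟩ := h.good.1.exists_isPathFromTo h.ne_nil
  obtain ⟨r, y, hr, hpr, hrs, hys, hyr, hyz, hins⟩ := h.exists_maximal_path hp
  have hyc : y ∈ p ++ s := List.mem_append_right _ hys
  have huc := h.not_mem_of_mem hu
  have hnd := h.good.1.2.1
  obtain ⟨hndp, hnds, hps⟩ := List.nodup_append'.1 hnd
  have huy : ¬ A u y := (h.not_two_walk_to hp hu huz hys).1
  have hyu : ¬ A y u := (h.not_two_walk_from hp hu huz hys).1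
  refine ⟨u, y, huz, hyz, fun e => huc (e ▸ hyc), not_or.2 ⟨huy, hyu⟩, ?_⟩
  have hup := sum_arcCount_path_le u hp.2.1 hp.2.2 (h.not_insert hp hu)
  have hyr' := sum_arcCount_path_le y hr.2.1 hr.2.2 hins
  have hpsum : ∑ v ∈ p.toFinset, arcCount A u v = (p.map (arcCount A u)).sum :=
    List.sum_toFinset _ hndp
  have hrsum : ∑ v ∈ r.toFinset, arcCount A y v = (r.map (arcCount A y)).sum :=
    List.sum_toFinset _ hr.1.2.1
  set C := (p ++ s).toFinset with hC
  have hCcard : C.card = p.length + s.length := by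
    rw [hC, List.toFinset_card_of_nodup hnd, List.length_append]
  have hus : ∑ v ∈ C, arcCount A u v = ∑ v ∈ p.toFinset, arcCount A u v := by
    refine (Finset.sum_subset (fun v hv => by simp at hv ⊢; simp [hC, hv]) fun v hv hvp => ?_).symm
    have hvs : v ∈ s := by simp [hC] at hv hvp; tauto
    simp [arcCount, (h.not_two_walk_to hp hu huz hvs).1, (h.not_two_walk_from hp hu huz hvs).1]
  have hrC : r.toFinset ⊆ C := fun v hv => by
    rw [hC, List.mem_toFinset]; exact hrs (List.mem_toFinset.1 hv)
  have hyC : ∑ v ∈ C, arcCount A y v + 2 * r.length + 2 ≤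
      ∑ v ∈ r.toFinset, arcCount A y v + 2 * C.card := by
    have h₁ := Finset.sum_sdiff (f := arcCount A y) hrC
    have hymem : y ∈ C \ r.toFinset := by simp [hC, hyr, hys]
    have h₂ := Finset.add_sum_erase _ (arcCount A y) hymem
    have h₃ : arcCount A y y = 0 := by simp [arcCount, hloops]
    have h₄ : ∑ v ∈ (C \ r.toFinset).erase y, arcCount A y v ≤ _ :=
      Finset.sum_le_card_nsmul _ _ 2 fun v _ => arcCount_le_two A y v
    have h₅ := Finset.card_erase_add_one hymem
    have h₆ := Finset.card_sdiff_add_card_eq_card hrC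
    rw [List.toFinset_card_of_nodup hr.1.2.1] at h₆
    simp only [smul_eq_mul] at h₄
    omega
  have hout : ∑ v ∈ Cᶜ, (arcCount A u v + arcCount A y v) + 2 * C.card + 2 +
      (if A b u then 1 else 0) + (if A u a then 1 else 0) ≤ 2 * Fintype.card V + 2 := by
    have humem : u ∈ Cᶜ := by rw [Finset.mem_compl, hC, List.mem_toFinset]; exact huc
    have h₁ := Finset.add_sum_erase _ (fun v => arcCount A u v + arcCount A y v) humem
    have h₂ : arcCount A u u + arcCount A y u = 0 := by simp [arcCount, hloops, huy, hyu]
    have hsum := sum_arcCount_add_le A u y (Cᶜ.erase u)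
    have h₃ := Finset.card_erase_add_one humem
    have h₄ := Finset.card_add_card_compl C
    have hz : ∀ v ∈ Cᶜ.erase u, A u v ∧ A v y ∨ A y v ∧ A v u → v = z := by
      intro v hv hv'
      have hvc : v ∉ p ++ s := by
        have := Finset.mem_compl.1 (Finset.mem_of_mem_erase hv)
        rwa [hC, List.mem_toFinset] at this
      by_contra hvz
      exact hv'.elim ((h.not_two_walk_to hp hu huz hys).2 v hvc hvz)
        ((h.not_two_walk_from hp hu huz hys).2 v hvc hvz)
    have key : ∀ (P : V → Prop) [DecidablePred P] (R : Prop) [Decidable R],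
        (∀ v ∈ Cᶜ.erase u, P v → v = z) → (z ∈ Cᶜ → ¬ (R ∧ P z)) →
        ∑ v ∈ Cᶜ.erase u, (if P v then 1 else 0) + (if R then 1 else 0) ≤ 1 := by
      intro P _ R _ hP hR
      split_ifs with hRt
      · rw [Finset.sum_eq_zero]
        intro v hv
        rw [if_neg]
        intro hPv
        obtain rfl := hP v hv hPv
        exact hR (Finset.mem_of_mem_erase hv) ⟨hRt, hPv⟩
      · exact sum_ite_le_one fun v hv w hw hPv hPw => (hP v hv hPv).trans (hP w hw hPw).symm
    have hzc : z ∈ Cᶜ → z ∉ p ++ s := fun hz => by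
      rwa [Finset.mem_compl, hC, List.mem_toFinset] at hz
    have h₅ := key (fun v => A u v ∧ A v y) (A b u) (fun v hv hP => hz v hv (Or.inl hP))
      fun hzC => (h.not_walk_exceptional hp hu huz hys (hzc hzC)).1
    have h₆ := key (fun v => A y v ∧ A v u) (A u a) (fun v hv hP => hz v hv (Or.inr hP))
      fun hzC hh => (h.not_walk_exceptional hp hu huz hys (hzc hzC)).2
        ⟨hh.2.1, hh.2.2, hh.1⟩
    omega
  have hdeg : deg A u + deg A y = ∑ v ∈ C, arcCount A u v + ∑ v ∈ C, arcCount A y v +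
      ∑ v ∈ Cᶜ, (arcCount A u v + arcCount A y v) := by
    rw [deg_eq_sum_arcCount, deg_eq_sum_arcCount, ← Finset.sum_add_distrib,
      ← Finset.sum_add_distrib, Finset.sum_add_sum_compl]
  have hpl : p.length ≤ r.length := (List.subperm_of_subset hndp hpr).length_le
  have hb₁ : (if A b y then 1 else 0) ≤ 1 := by split_ifs <;> simp
  have hb₂ : (if A y a then 1 else 0) ≤ 1 := by split_ifs <;> simp
  omega

theorem deg_add_deg_le_of_middle_le [Fintype V] {A : V → V → Prop} (hloops : ∀ v, ¬ A v v)
    {u y z : V} (huy : u ≠ y) (hadj : ¬ DAdj A u y) (h₁ : ∀ w, A u w → A w y → w = z)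
    (h₂ : ∀ w, A y w → A w u → w = z) : deg A u + deg A y + 2 ≤ 2 * Fintype.card V := by
  classical
  obtain ⟨hn₁, hn₂⟩ := not_or.1 hadj
  rw [deg_eq_sum_arcCount, deg_eq_sum_arcCount, ← Finset.sum_add_distrib]
  set T : Finset V := {u, y} with hT
  have hsum := sum_arcCount_add_le A u y Tᶜ
  have h₃ := sum_ite_le_one (T := Tᶜ) (P := fun w => A u w ∧ A w y)
    fun v _ w _ hv hw => (h₁ v hv.1 hv.2).trans (h₁ w hw.1 hw.2).symm
  have h₄ := sum_ite_le_one (T := Tᶜ) (P := fun w => A y w ∧ A w u)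
    fun v _ w _ hv hw => (h₂ v hv.1 hv.2).trans (h₂ w hw.1 hw.2).symm
  have h₅ : ∑ v ∈ T, (arcCount A u v + arcCount A y v) = 0 := by
    simp [hT, Finset.sum_pair huy, arcCount, hloops, hn₁, hn₂]
  have h₆ := Finset.sum_add_sum_compl T fun v => arcCount A u v + arcCount A y v
  have h₇ := Finset.card_add_card_compl T
  have h₈ : T.card = 2 := Finset.card_pair huy
  omega

theorem exists_isEar_of_walk_from [DecidableEq V] {A : V → V → Prop} (hconn : StronglyConnected A)
    {u z y : V} {c w : List V} (hgood : IsGoodCycle A z c) (hu : u ∉ c) (huz : u ≠ z)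
    (hw : List.IsChain A (u :: (w ++ [y]))) (hwz : z ∉ w) (hwc : ∀ v ∈ w, v ∉ c) (hy : y ∈ c) :
    ∃ p s q, IsEar A z p s q := by
  obtain ⟨w', a, ha, hw', hnd, hwc'⟩ := exists_walk_in hconn (S := {v | v ∈ c}) ⟨y, hy⟩ hu
  refine exists_isEar_of_walk (w := w' ++ u :: w) hgood ha hy ?_ ?_ ?_ ⟨u, by simp, huz⟩
  · have e : a :: (w' ++ u :: w ++ [y]) = (a :: w') ++ u :: (w ++ [y]) := by simp
    rw [e, List.isChain_split]
    exact ⟨hw', hw⟩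
  · intro v hv
    rcases List.mem_append.1 hv with hv | hv
    · exact hwc' v hv
    · rcases List.mem_cons.1 hv with rfl | hv
      · exact hu
      · exact hwc v hv
  · have e : w' ++ u :: w = (w' ++ [u]) ++ w := by simp
    rw [e, List.count_append, List.count_eq_zero.2 hwz]
    exact List.nodup_iff_count_le_one.1 hnd z

theorem exists_isEar_of_walk_into [DecidableEq V] {A : V → V → Prop} (hconn : StronglyConnected A)
    {u z y : V} {c w : List V} (hgood : IsGoodCycle A z c) (hu : u ∉ c) (huz : u ≠ z)
    (hw : List.IsChain A (y :: (w ++ [u]))) (hwz : z ∉ w) (hwc : ∀ v ∈ w, v ∉ c) (hy : y ∈ c) :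
    ∃ p s q, IsEar A z p s q := by
  obtain ⟨w', b, hb, hw', hnd, hwc'⟩ := exists_walk_out hconn (S := {v | v ∈ c}) ⟨y, hy⟩ hu
  refine exists_isEar_of_walk (w := w ++ u :: w') hgood hy hb ?_ ?_ ?_ ⟨u, by simp, huz⟩
  · have e : y :: (w ++ u :: w' ++ [b]) = (y :: w) ++ u :: (w' ++ [b]) := by simp
    rw [e, List.isChain_split]
    exact ⟨hw, hw'⟩
  · intro v hv
    rcases List.mem_append.1 hv with hv | hv
    · exact hwc v hv
    · rcases List.mem_cons.1 hv with rfl | hv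
      · exact hu
      · exact hwc' v hv
  · rw [List.count_append, List.count_eq_zero.2 hwz, zero_add]
    exact List.nodup_iff_count_le_one.1 hnd z

theorem StronglyConnected.exists_isCycleOn [Fintype V] {A : V → V → Prop}
    (hconn : StronglyConnected A) (hn : 2 ≤ Fintype.card V) : ∃ c, IsCycleOn A c := by
  classical
  obtain ⟨a, b, hab⟩ := Fintype.exists_pair_of_one_lt_card hn
  obtain ⟨w, b', rfl, hw, hwn, hwS⟩ := exists_walk_out hconn (S := {a}) ⟨a, rfl⟩ (u := b) hab.symm
  obtain ⟨w', a', rfl, hw', hwn', hwS'⟩ :=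
    exists_walk_in hconn (S := {b'}) ⟨b', rfl⟩ (u := b) hab.symm
  have hch : List.IsChain A (a' :: (w' ++ b :: w ++ [a'])) := by
    have e : a' :: (w' ++ b :: w ++ [a']) = (a' :: w') ++ b :: (w ++ [a']) := by simp
    rw [e, List.isChain_split]
    exact ⟨hw', hw⟩
  have hmem : ∀ v ∈ w' ++ b :: w, v ≠ a' := by
    intro v hv
    rcases List.mem_append.1 hv with hv | hv
    · exact hwS' v hv
    · rcases List.mem_cons.1 hv with rfl | hv
      · exact hab.symm
      · exact hwS v hv
  obtain ⟨q, hq, hqn, hqu, hqw⟩ := exists_nodup_walk (z := a') _ hch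
    (by rw [List.count_eq_zero.2 fun h => hmem _ h rfl]; simp) ⟨b, by simp, hab.symm⟩
  refine ⟨[a'] ++ q, (isCycleOn_append_iff (a := a') (b := a')
    ⟨⟨by simp, by simp, List.isChain_singleton _⟩, by simp, by simp⟩ (by rintro rfl; simp at hqu)).2 ⟨hqn, ?_, hq⟩⟩
  intro v hv
  simpa using hmem v (hqw hv)

theorem exists_isEar_or_exists_deg_add_deg_le [Fintype V] {A : V → V → Prop}
    (hloops : ∀ v, ¬ A v v) (hconn : StronglyConnected A) {z : V} {c : List V}
    (hgood : IsGoodCycle A z c) (hc : c.length + 2 ≤ Fintype.card V) :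
    (∃ p s q, IsEar A z p s q) ∨ ∃ u y, u ≠ z ∧ y ≠ z ∧ u ≠ y ∧ ¬ DAdj A u y ∧
      deg A u + deg A y + 2 ≤ 2 * Fintype.card V := by
  classical
  obtain ⟨u, hu⟩ : ∃ u, u ∉ z :: c := by
    by_contra! hall
    have h₁ : (Finset.univ : Finset V) ⊆ (z :: c).toFinset := fun v _ =>
      List.mem_toFinset.2 (hall v)
    have h₂ := (Finset.card_le_card h₁).trans (List.toFinset_card_le _)
    simp at h₂
    omega
  obtain ⟨y, hy, hyz⟩ : ∃ y ∈ c, y ≠ z := by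
    by_contra! hall
    have h₁ := (List.subperm_of_subset hgood.1.2.1 (l₂ := [z])
      fun v hv => by simp [hall v hv]).length_le
    have h₂ := hgood.1.1
    simp at h₁
    omega
  obtain ⟨huz, huc⟩ : u ≠ z ∧ u ∉ c := by simpa using hu
  by_cases hear : ∃ p s q, IsEar A z p s q
  · exact Or.inl hear
  have huy : u ≠ y := by rintro rfl; exact huc hy
  have hout : ∀ {x}, x ∈ c → ¬ A u x := fun hx hux => hear <|
    exists_isEar_of_walk_from hconn hgood huc huz (w := []) (by simpa using hux) (by simp)
      (by simp) hx
  have hin : ∀ {x}, x ∈ c → ¬ A x u := fun hx hxu => hear <|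
    exists_isEar_of_walk_into hconn hgood huc huz (w := []) (by simpa using hxu) (by simp)
      (by simp) hx
  refine Or.inr ⟨u, y, huz, hyz, huy, not_or.2 ⟨hout hy, hin hy⟩,
    deg_add_deg_le_of_middle_le (z := z) hloops huy (not_or.2 ⟨hout hy, hin hy⟩) ?_ ?_⟩
  · intro w huw hwy
    by_contra hwz
    exact hear <| exists_isEar_of_walk_from hconn hgood huc huz (w := [w])
      (by simpa using ⟨huw, hwy⟩) (by simpa using Ne.symm hwz)
      (by simpa using fun hw => hout hw huw) hy
  · intro w hyw hwu
    by_contra hwz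
    exact hear <| exists_isEar_of_walk_into hconn hgood huc huz (w := [w])
      (by simpa using ⟨hyw, hwu⟩) (by simpa using Ne.symm hwz)
      (by simpa using fun hw => hin hw hwu) hy

/-- Theorem D. -/
theorem hamiltonian_or_cycle_n_sub_one [Fintype V] (A : V → V → Prop)
    (hloops : ∀ v, ¬ A v v)
    (hn : 3 ≤ Fintype.card V) (hconn : StronglyConnected A)
    (z₀ : V)
    (hdeg : ∀ x y : V, x ≠ z₀ → y ≠ z₀ → x ≠ y → ¬ DAdj A x y →
      deg A x + deg A y ≥ 2 * Fintype.card V - 1) :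
    (∃ l : List V, IsCycleOn A l ∧ ∀ v : V, v ∈ l) ∨
      ∃ l : List V, IsCycleOn A l ∧ l.length = Fintype.card V - 1 := by
  classical
  obtain ⟨c, hgood⟩ := exists_isGoodCycle z₀ (hconn.exists_isCycleOn (by omega))
  have hle : c.length ≤ Fintype.card V := List.Nodup.length_le_card hgood.1.2.1
  by_cases h₁ : c.length = Fintype.card V
  · refine Or.inl ⟨c, hgood.1, fun v => ?_⟩
    rw [← List.mem_toFinset, Finset.eq_univ_of_card _
      ((List.toFinset_card_of_nodup hgood.1.2.1).trans h₁)]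
    exact Finset.mem_univ v
  by_cases h₂ : c.length = Fintype.card V - 1
  · exact Or.inr ⟨c, hgood.1, h₂⟩
  exfalso
  obtain ⟨u, y, hu, hy, huy, hadj, hle'⟩ : ∃ u y, u ≠ z₀ ∧ y ≠ z₀ ∧ u ≠ y ∧ ¬ DAdj A u y ∧
      deg A u + deg A y + 2 ≤ 2 * Fintype.card V := by
    rcases exists_isEar_or_exists_deg_add_deg_le hloops hconn hgood (by omega) with h | h
    · obtain ⟨p, s, q, h⟩ := exists_isMinEar h
      exact h.exists_deg_add_deg_le hloops
    · exact h
  have := hdeg u y hu hy huy hadj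
  omega
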